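/- arXiv:2304.09124 — 2 statements merged into one kernel-verified Lean document; each statement's English description precedes it below -/
import Mathlib

section
/- Let A be a unital ℂ-algebra and let p, q ∈ A be idempotents. Set R = R(p,q) and consider the ⊛-product R ⊛ R ∈ M₄(A ⊗_ℂ A). Then: (1) R_{12} = 0, so the monomial x₁₂ vanishes on R; (2) (R ⊛ R)_{12} = (1−p) ⊗ q, and if p ≠ 1 and q ≠ 0 then (R ⊛ R)_{12} ≠ 0, so x₁₂ does not vanish on R ⊛ R; (3) (R ⊛ R)_{12} · (R ⊛ R)_{24} = 0, so the monomial x₁₂·x₂₄ vanishes on R ⊛ R. -/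
open scoped TensorProduct

/-- The matrix `R(p,q)` with rows `(p, 0, 1−p, 0)`, `(1−p, 0, p, 0)`, `(0, q, 0, 1−q)`,
`(0, 1−q, 0, q)`. -/
def Rmat {A : Type*} [Ring A] (p q : A) : Matrix (Fin 4) (Fin 4) A :=
  !![p, 0, 1 - p, 0;
     1 - p, 0, p, 0;
     0, q, 0, 1 - q;
     0, 1 - q, 0, q]

/-- The `⊛`-product of two matrices, with `(M₁ ⊛ M₂) i j = ∑ k, M₁ i k ⊗ M₂ k j`. -/
noncomputable def starProd {n : ℕ} {A₁ A₂ : Type*} [Ring A₁] [Ring A₂]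
    [Algebra ℂ A₁] [Algebra ℂ A₂]
    (M₁ : Matrix (Fin n) (Fin n) A₁) (M₂ : Matrix (Fin n) (Fin n) A₂) :
    Matrix (Fin n) (Fin n) (A₁ ⊗[ℂ] A₂) :=
  fun i j => ∑ k, M₁ i k ⊗ₜ[ℂ] M₂ k j

theorem tmul_eq_zero_iff {R M N : Type*} [CommRing R] [IsDomain R]
    [AddCommGroup M] [Module R M] [Module.IsTorsionFree R M]
    [AddCommGroup N] [Module R N] [Module.IsTorsionFree R N] {x : M} {y : N} :
    x ⊗ₜ[R] y = 0 ↔ x = 0 ∨ y = 0 := by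
  refine ⟨fun hxy ↦ ?_, ?_⟩
  · by_contra! ⟨hx, hy⟩
    have hx_indep : LinearIndependent R fun _ : Unit ↦ x := .of_subsingleton () hx
    have hy_indep : LinearIndependent R fun _ : Unit ↦ y := .of_subsingleton () hy
    exact (hx_indep.tmul_of_isDomain hy_indep).ne_zero ((), ()) hxy
  · rintro (rfl | rfl)
    · exact TensorProduct.zero_tmul M y
    · exact TensorProduct.tmul_zero N x

section StarProd

variable {A₁ A₂ : Type*} [Ring A₁] [Ring A₂] [Algebra ℂ A₁] [Algebra ℂ A₂]
  (p₁ q₁ : A₁) (p₂ q₂ : A₂)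

theorem starProd_Rmat_zero_one :
    starProd (Rmat p₁ q₁) (Rmat p₂ q₂) 0 1 = (1 - p₁) ⊗ₜ[ℂ] q₂ := by
  simp [starProd, Rmat, Fin.sum_univ_four]

theorem starProd_Rmat_one_three :
    starProd (Rmat p₁ q₁) (Rmat p₂ q₂) 1 3 = p₁ ⊗ₜ[ℂ] (1 - q₂) := by
  simp [starProd, Rmat, Fin.sum_univ_four]

theorem starProd_Rmat_zero_one_ne_zero_iff :
    starProd (Rmat p₁ q₁) (Rmat p₂ q₂) 0 1 ≠ 0 ↔ p₁ ≠ 1 ∧ q₂ ≠ 0 := by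
  rw [starProd_Rmat_zero_one, ne_eq, tmul_eq_zero_iff, sub_eq_zero, eq_comm, not_or]

theorem starProd_Rmat_zero_one_mul_one_three :
    starProd (Rmat p₁ q₁) (Rmat p₂ q₂) 0 1 * starProd (Rmat p₁ q₁) (Rmat p₂ q₂) 1 3 =
      ((1 - p₁) * p₁) ⊗ₜ[ℂ] (q₂ * (1 - q₂)) := by
  rw [starProd_Rmat_zero_one, starProd_Rmat_one_three, Algebra.TensorProduct.tmul_mul_tmul]

theorem starProd_Rmat_zero_one_mul_one_three_eq_zero_iff :
    starProd (Rmat p₁ q₁) (Rmat p₂ q₂) 0 1 * starProd (Rmat p₁ q₁) (Rmat p₂ q₂) 1 3 = 0 ↔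
      IsIdempotentElem p₁ ∨ IsIdempotentElem q₂ := by
  rw [starProd_Rmat_zero_one_mul_one_three, tmul_eq_zero_iff,
    isIdempotentElem_iff_one_sub_mul_self, isIdempotentElem_iff_mul_one_sub_self]

theorem Rmat_separating_polynomials_general :
    Rmat p₁ q₁ 0 1 = 0 ∧
    starProd (Rmat p₁ q₁) (Rmat p₂ q₂) 0 1 = (1 - p₁) ⊗ₜ[ℂ] q₂ ∧
    (starProd (Rmat p₁ q₁) (Rmat p₂ q₂) 0 1 ≠ 0 ↔ p₁ ≠ 1 ∧ q₂ ≠ 0) ∧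
    (starProd (Rmat p₁ q₁) (Rmat p₂ q₂) 0 1 * starProd (Rmat p₁ q₁) (Rmat p₂ q₂) 1 3 = 0 ↔
      IsIdempotentElem p₁ ∨ IsIdempotentElem q₂) :=
  ⟨rfl, starProd_Rmat_zero_one p₁ q₁ p₂ q₂,
    starProd_Rmat_zero_one_ne_zero_iff p₁ q₁ p₂ q₂,
    starProd_Rmat_zero_one_mul_one_three_eq_zero_iff p₁ q₁ p₂ q₂⟩

end StarProd

/-- For idempotents `p`, `q` in a unital `ℂ`-algebra `A`, with
`R = R(p,q)`: (1) the `(1,2)` entry of `R` is zero; (2) the `(1,2)` entry of `R ⊛ R` is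
`(1−p) ⊗ q`, which is nonzero whenever `p ≠ 1` and `q ≠ 0`; (3) the product of the `(1,2)`
and `(2,4)` entries of `R ⊛ R` is zero. -/
theorem Rmat_separating_polynomials {A : Type*} [Ring A] [Algebra ℂ A] (p q : A)
    (hp : p * p = p) (hq : q * q = q) :
    Rmat p q 0 1 = 0 ∧
    starProd (Rmat p q) (Rmat p q) 0 1 = (1 - p) ⊗ₜ[ℂ] q ∧
    (p ≠ 1 → q ≠ 0 → starProd (Rmat p q) (Rmat p q) 0 1 ≠ 0) ∧
    starProd (Rmat p q) (Rmat p q) 0 1 * starProd (Rmat p q) (Rmat p q) 1 3 = 0 := by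
  obtain ⟨h_zero, h_entry, h_ne_zero, h_mul⟩ := Rmat_separating_polynomials_general p q p q
  exact ⟨h_zero, h_entry, fun hp1 hq0 ↦ h_ne_zero.2 ⟨hp1, hq0⟩, h_mul.2 (.inl hp)⟩
end

section
/- For every permutation σ of {1, 2, 3, 4} there exist scalars p₁, q₁, p₂, q₂, p₃, q₃ ∈ {0, 1} ⊆ ℂ such that the matrix product R(p₁,q₁)·R(p₂,q₂)·R(p₃,q₃) ∈ M₄(ℂ) equals the permutation matrix of σ. In particular, evaluating the entries of the iterated ⊛-product R^{⊛3} at characters sending the projections of each tensor leg to 0 or 1 produces all 24 permutation matrices in M₄(ℂ). -/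
/-!
Number the cells of a `2 × 2` grid row by row. For `p, q ∈ {0, 1}`, the matrix `R(p,q)` is then the
permutation matrix of the transposition of the grid followed by an arbitrary permutation within each
row, where `p` and `q` tell which rows stay fixed. A product `R(p₁,q₁) R(p₂,q₂) R(p₃,q₃)` permutes
rows, then columns, then rows, up to one leftover transposition of the grid. Every permutation
`σ` of a finite grid has such a row–column–row factorization: by Hall's theorem one can first
permute within the rows so that, in each column, the cells have images under `σ` in distinct rows.
-/

open Equiv Finset Function

section RowColumnRow

variable {α β γ : Type*} [Fintype α] [DecidableEq α]

/-- A family `r : α → β → α` is balanced if every `x : α` is the value of `r i j` for exactly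
`card β` pairs `(i, j)`. It encodes a regular bipartite multigraph on two copies of `α`, whose edges
at the left vertex `i` are indexed by `j : β` and end at the right vertices `r i j`. -/
def IsBalanced [Fintype β] (r : α → β → α) : Prop :=
  ∀ x, ∑ i, #{j | r i j = x} = Fintype.card β

theorem IsBalanced.exists_bijective_transversal [Fintype β] [Nonempty β] {r : α → β → α}
    (hr : IsBalanced r) :
    ∃ f : α → β, Bijective fun i ↦ r i (f i) := by
  have hall (s : Finset α) : #s ≤ #(s.biUnion fun i ↦ univ.image (r i)) := by
    set t := s.biUnion fun i ↦ univ.image (r i)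
    have maps_to {i : α} (hi : i ∈ s) (j : β) : r i j ∈ t :=
      mem_biUnion.2 ⟨i, hi, mem_image_of_mem _ (mem_univ j)⟩
    refine Nat.le_of_mul_le_mul_right ?_ (Fintype.card_pos (α := β))
    calc #s * Fintype.card β = ∑ i ∈ s, ∑ x ∈ t, #{j | r i j = x} := by
          rw [← smul_eq_mul, ← sum_const]
          exact sum_congr rfl fun i hi ↦ card_eq_sum_card_fiberwise fun j _ ↦ maps_to hi j
      _ = ∑ x ∈ t, ∑ i ∈ s, #{j | r i j = x} := sum_comm
      _ ≤ ∑ x ∈ t, ∑ i, #{j | r i j = x} :=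
          sum_le_sum fun x _ ↦ sum_le_sum_of_subset (subset_univ s)
      _ = #t * Fintype.card β := by simp only [hr _, sum_const, smul_eq_mul]
  obtain ⟨g, g_injective, hg⟩ := (all_card_le_biUnion_card_iff_exists_injective _).1 hall
  choose f hf using fun i ↦ mem_image.1 (hg i)
  refine ⟨f, ?_⟩
  simpa only [(hf _).2] using Finite.injective_iff_bijective.1 g_injective

theorem IsBalanced.comp_equiv [Fintype β] [Fintype γ] {r : α → β → α} (hr : IsBalanced r)
    (e : α → γ ≃ β) : IsBalanced fun i j ↦ r i (e i j) := by
  intro x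
  rw [Fintype.card_congr (e x), ← hr x]
  simp only [card_filter]
  exact sum_congr rfl fun i _ ↦ (e i).sum_comp fun j ↦ if r i j = x then 1 else 0

theorem IsBalanced.restrict_some [Fintype β] {r : α → Option β → α} (hr : IsBalanced r)
    (hnone : Bijective fun i ↦ r i none) : IsBalanced fun i j ↦ r i (some j) := by
  intro x
  have sum_none : ∑ i, (if r i none = x then 1 else 0) = 1 := by
    rw [hnone.sum_comp fun y ↦ if y = x then 1 else 0, Fintype.sum_ite_eq']
  have sum_all := hr x
  simp only [card_filter, Fintype.sum_option, sum_add_distrib, sum_none,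
    Fintype.card_option] at sum_all ⊢
  lia

/-- König's edge colouring theorem for regular bipartite multigraphs: `c i j` is the edge at `i` of
colour `j`. -/
theorem IsBalanced.exists_perm_forall_bijective [Fintype β] {r : α → β → α} (hr : IsBalanced r) :
    ∃ c : α → Perm β, ∀ j, Bijective fun i ↦ r i (c i j) := by
  classical
  refine Fintype.induction_empty_option
    (P := fun β _ ↦ ∀ {r : α → β → α}, IsBalanced r →
      ∃ c : α → Perm β, ∀ j, Bijective fun i ↦ r i (c i j))
    ?of_equiv ?empty ?option β hr
  case of_equiv =>
    intro β γ _ e ih r hr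
    let := Fintype.ofEquiv γ e.symm
    obtain ⟨c, hc⟩ := ih (hr.comp_equiv fun _ ↦ e)
    exact ⟨fun i ↦ e.permCongr (c i), fun j ↦ hc (e.symm j)⟩
  case empty => exact fun _ ↦ ⟨fun _ ↦ 1, fun j ↦ j.elim⟩
  case option =>
    intro β _ ih r hr
    obtain ⟨f, hf⟩ := hr.exists_bijective_transversal
    let c₀ (i : α) : Perm (Option β) := swap none (f i)
    have hc₀ : Bijective fun i ↦ r i (c₀ i none) := by simpa only [c₀, swap_apply_left] using hf
    obtain ⟨c, hc⟩ := ih ((hr.comp_equiv c₀).restrict_some hc₀)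
    refine ⟨fun i ↦ c₀ i * (c i).optionCongr, fun j ↦ ?_⟩
    cases j with
    | none => exact hc₀
    | some j => exact hc j

theorem isBalanced_fst_apply [Fintype β] (σ : Perm (α × β)) :
    IsBalanced fun i j ↦ (σ (i, j)).1 := by
  intro x
  calc ∑ i, #{j | (σ (i, j)).1 = x} = ∑ p, if (σ p).1 = x then 1 else 0 := by
        simp only [card_filter, Fintype.sum_prod_type]
    _ = ∑ p : α × β, if p.1 = x then 1 else 0 :=
        Equiv.sum_comp σ fun p ↦ if p.1 = x then 1 else 0
    _ = Fintype.card β := by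
        simp only [Fintype.sum_prod_type_right, Fintype.sum_ite_eq', sum_const, card_univ,
          smul_eq_mul, mul_one]

end RowColumnRow

theorem exists_row_mul_column_mul_row {α β : Type*} [Finite α] [Finite β] (σ : Perm (α × β)) :
    ∃ (a : α → Perm β) (b : β → Perm α) (c : α → Perm β),
      σ = prodCongrRight a * prodCongrLeft b * prodCongrRight c := by
  classical
  have := Fintype.ofFinite α
  have := Fintype.ofFinite β
  obtain ⟨c, hc⟩ := (isBalanced_fst_apply σ).exists_perm_forall_bijective
  let b (j : β) : Perm α := .ofBijective _ (hc j)
  let τ : Perm (α × β) := σ * prodCongrRight c * (prodCongrLeft b)⁻¹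
  have τ_fst (i : α) (j : β) : (τ (i, j)).1 = i := (b j).apply_symm_apply i
  have τ_injective (i : α) : Injective fun j ↦ (τ (i, j)).2 := fun j j' h ↦
    congrArg Prod.snd (τ.injective (Prod.ext ((τ_fst i j).trans (τ_fst i j').symm) h))
  let a (i : α) : Perm β := .ofBijective _ (Finite.injective_iff_bijective.1 (τ_injective i))
  have τ_eq : prodCongrRight a = τ := Equiv.ext fun p ↦ Prod.ext (τ_fst p.1 p.2).symm rfl
  refine ⟨a, b, fun i ↦ (c i)⁻¹, ?_⟩
  rw [τ_eq, inv_mul_cancel_right]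
  exact (mul_inv_cancel_right σ (prodCongrRight c)).symm

/-- Transposition of the square grid followed by the permutation `a i` of each row `i`. -/
def switchStage {α : Type*} (a : α → Perm α) : Perm (α × α) :=
  prodCongrRight a * prodComm _ _

theorem exists_eq_switchStage_mul {α : Type*} [Finite α] (σ : Perm (α × α)) :
    ∃ a b c, σ = switchStage a * switchStage b * switchStage c := by
  obtain ⟨a, b, c, h⟩ := exists_row_mul_column_mul_row (σ * prodComm _ _)
  refine ⟨a, b, c, ?_⟩
  have column_eq : prodCongrLeft b = prodComm _ _ * switchStage b := rfl
  calc σ = σ * prodComm _ _ * prodComm _ _ := rfl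
    _ = switchStage a * switchStage b * switchStage c := by
      rw [h, column_eq]
      simp only [switchStage, mul_assoc]

theorem permMatrixHom_eq_of {n R : Type*} [Fintype n] [DecidableEq n] [NonAssocSemiring R]
    (σ : Perm n) :
    Matrix.permMatrixHom σ = Matrix.of fun i j ↦ if i = σ j then (1 : R) else 0 := by
  ext i j
  change σ⁻¹.permMatrix R i j = _
  simp [PEquiv.toMatrix_apply, toPEquiv_apply, Equiv.symm_apply_eq]

/-- A permutation of `Fin 2`, encoded as `1` if it is the identity and `0` if it is the swap. -/
def fixBit (A : Type*) [Zero A] [One A] (π : Perm (Fin 2)) : A :=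
  if π = 1 then 1 else 0

theorem fixBit_mem (A : Type*) [Zero A] [One A] (π : Perm (Fin 2)) :
    fixBit A π ∈ ({0, 1} : Set A) := by
  unfold fixBit
  split_ifs <;> simp

/-- The numbering of the cells of the `2 × 2` grid row by row, `(i, k) ↦ 2 * i + k`. -/
def cellEquiv : Fin 2 × Fin 2 ≃ Fin 4 :=
  finProdFinEquiv

theorem Rmat_fixBit_eq_permMatrixHom (A : Type*) [Ring A] (a : Fin 2 → Perm (Fin 2)) :
    Rmat (fixBit A (a 0)) (fixBit A (a 1)) =
      Matrix.permMatrixHom (cellEquiv.permCongrHom (switchStage a)) := by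
  have cases_perm : ∀ π : Perm (Fin 2), π = 1 ∨ π = swap 0 1 := by decide
  have swap_ne : swap (0 : Fin 2) 1 ≠ 1 := by decide
  ext x y
  obtain ⟨⟨i, k⟩, rfl⟩ := cellEquiv.surjective x
  obtain ⟨⟨j, l⟩, rfl⟩ := cellEquiv.surjective y
  have image_eq : cellEquiv.permCongrHom (switchStage a) (cellEquiv (j, l)) =
      cellEquiv (l, a l j) := by
    simp [switchStage]
  rw [permMatrixHom_eq_of, Matrix.of_apply, image_eq]
  simp only [EmbeddingLike.apply_eq_iff_eq, Prod.mk.injEq]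
  rcases cases_perm (a 0) with h₀ | h₀ <;> rcases cases_perm (a 1) with h₁ | h₁ <;>
    fin_cases i <;> fin_cases j <;> fin_cases k <;> fin_cases l <;>
    simp [Rmat, fixBit, h₀, h₁, swap_ne, cellEquiv, finProdFinEquiv]

theorem Rmat_products_give_all_permutation_matrices_general {A : Type*} [Ring A]
    (σ : Perm (Fin 4)) :
    ∃ p₁ q₁ p₂ q₂ p₃ q₃ : A,
      p₁ ∈ ({0, 1} : Set A) ∧ q₁ ∈ ({0, 1} : Set A) ∧
      p₂ ∈ ({0, 1} : Set A) ∧ q₂ ∈ ({0, 1} : Set A) ∧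
      p₃ ∈ ({0, 1} : Set A) ∧ q₃ ∈ ({0, 1} : Set A) ∧
      Rmat p₁ q₁ * Rmat p₂ q₂ * Rmat p₃ q₃ =
        Matrix.of (fun i j => if i = σ j then (1 : A) else 0) := by
  obtain ⟨τ, rfl⟩ := cellEquiv.permCongrHom.surjective σ
  obtain ⟨a, b, c, rfl⟩ := exists_eq_switchStage_mul τ
  refine ⟨_, _, _, _, _, _, fixBit_mem A (a 0), fixBit_mem A (a 1), fixBit_mem A (b 0),
    fixBit_mem A (b 1), fixBit_mem A (c 0), fixBit_mem A (c 1), ?_⟩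
  simp only [← permMatrixHom_eq_of, Rmat_fixBit_eq_permMatrixHom, map_mul]

/-- Every permutation matrix in `M₄(ℂ)` arises as a product
`R(p₁,q₁) · R(p₂,q₂) · R(p₃,q₃)` for suitable scalars `p₁, q₁, p₂, q₂, p₃, q₃ ∈ {0, 1}`. -/
theorem Rmat_products_give_all_permutation_matrices (σ : Equiv.Perm (Fin 4)) :
    ∃ p₁ q₁ p₂ q₂ p₃ q₃ : ℂ,
      p₁ ∈ ({0, 1} : Set ℂ) ∧ q₁ ∈ ({0, 1} : Set ℂ) ∧
      p₂ ∈ ({0, 1} : Set ℂ) ∧ q₂ ∈ ({0, 1} : Set ℂ) ∧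
      p₃ ∈ ({0, 1} : Set ℂ) ∧ q₃ ∈ ({0, 1} : Set ℂ) ∧
      Rmat p₁ q₁ * Rmat p₂ q₂ * Rmat p₃ q₃ =
        Matrix.of (fun i j => if i = σ j then (1 : ℂ) else 0) := by
  exact Rmat_products_give_all_permutation_matrices_general σ
end
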